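/- arXiv:2208.11414 — 5 statements merged into one kernel-verified Lean document; each statement's English description precedes it below -/
import Mathlib

section
/- Let G be a finite simple undirected graph with an st-orientation for distinct vertices s and t, and let (v_1, v_2, ..., v_k) be a path in G such that every internal vertex v_2, ..., v_{k-1} has degree 2 in G and is distinct from s and t. Then the edges of the path are oriented consistently: either every edge {v_i, v_{i+1}} (for i = 1, ..., k-1) is directed from v_i to v_{i+1}, or every such edge is directed from v_{i+1} to v_i. -/
variable {V : Type*}

/-- `D` is an orientation of `G`: every directed edge lies on an edge of `G`,
and every edge of `G` receives exactly one of the two possible directions. -/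
def IsOrientation (G : SimpleGraph V) (D : V → V → Prop) : Prop :=
  (∀ u v, D u v → G.Adj u v) ∧ ∀ u v, G.Adj u v → (D u v ↔ ¬ D v u)

/-- A digraph is acyclic if it has no directed cycle. -/
def DigraphAcyclic (D : V → V → Prop) : Prop :=
  ∀ v, ¬ Relation.TransGen D v v

/-- An st-orientation: an acyclic orientation with unique source `s` and unique sink `t`. -/
def IsSTOrientation (G : SimpleGraph V) (D : V → V → Prop) (s t : V) : Prop :=
  IsOrientation G D ∧ DigraphAcyclic D ∧
    (∀ u, ¬ D u s) ∧ (∀ v, (∀ u, ¬ D u v) → v = s) ∧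
    (∀ u, ¬ D t u) ∧ (∀ v, (∀ u, ¬ D v u) → v = t)

/-- A directed edge `(u,v)` is transitive if there is a directed path from `u` to `v`
of length at least 2. -/
def TransEdge (D : V → V → Prop) (u v : V) : Prop :=
  D u v ∧ ∃ w, D u w ∧ Relation.TransGen D w v

/-- A non-transitive st-orientation: an st-orientation with no transitive edge. -/
def IsNonTransSTOrientation (G : SimpleGraph V) (D : V → V → Prop) (s t : V) : Prop :=
  IsSTOrientation G D s t ∧ ∀ u v, ¬ TransEdge D u v

/-!
At an internal vertex of the path, the two path edges are the only edges of `G`. If both pointed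
in, the vertex would be a sink; if both pointed out, it would be a source. Hence one edge enters and
the other leaves, so the direction of the first edge propagates along the whole path.
-/

/-- A source of a digraph: a vertex with no incoming edge, excluded in the interior of the path.
A vertex without any edge counts as a source and as a sink. -/
def IsSource (D : V → V → Prop) (v : V) : Prop :=
  ∀ u, ¬ D u v

/-- A sink of a digraph: a vertex with no outgoing edge, excluded in the interior of the path.
It is by definition a source of `flip D`, which halves the case analysis. -/
def IsSink (D : V → V → Prop) (v : V) : Prop :=
  ∀ u, ¬ D v u

theorem eq_pair_of_encard_le_two {α : Type*} {A : Set α} (hA : A.encard ≤ 2) {a b : α}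
    (ha : a ∈ A) (hb : b ∈ A) (hab : a ≠ b) : A = {a, b} :=
  ((Set.toFinite {a, b}).eq_of_subset_of_encard_le (Set.pair_subset ha hb)
    (hA.trans_eq (Set.encard_pair hab).symm)).symm

theorem encard_neighborSet_eq_degree (G : SimpleGraph V) (v : V) [Fintype (G.neighborSet v)] :
    (G.neighborSet v).encard = G.degree v := by
  rw [← G.coe_neighborFinset, Set.encard_coe_eq_coe_finsetCard, G.card_neighborFinset_eq_degree]

theorem iff_zero_of_iff_succ {k : ℕ} {P : ℕ → Prop} (hP : ∀ i, i + 1 < k → (P i ↔ P (i + 1))) :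
    ∀ i, i < k → (P i ↔ P 0)
  | 0, _ => Iff.rfl
  | i + 1, hi => (hP i hi).symm.trans (iff_zero_of_iff_succ hP i (Nat.lt_of_succ_lt hi))

namespace IsOrientation

variable {G : SimpleGraph V} {D : V → V → Prop} {a b v : V}

theorem flip (hD : IsOrientation G D) : IsOrientation G (flip D) :=
  ⟨fun u v huv => (hD.1 v u huv).symm, fun u v huv => hD.2 v u huv.symm⟩

theorem rel_of_rel_of_not_isSink (hD : IsOrientation G D) (hv : G.neighborSet v = {a, b})
    (hsink : ¬ IsSink D v) (hav : D a v) : D v b := by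
  obtain ⟨w, hvw⟩ : ∃ w, D v w := by simpa only [IsSink, not_forall, not_not] using hsink
  have hw : w ∈ ({a, b} : Set V) := hv ▸ hD.1 v w hvw
  rcases hw with rfl | rfl
  · exact absurd hvw ((hD.2 w v (hD.1 w v hav)).1 hav)
  · exact hvw

theorem rel_iff_rel_of_neighborSet_eq_pair (hD : IsOrientation G D)
    (hv : G.neighborSet v = {a, b}) (hsource : ¬ IsSource D v) (hsink : ¬ IsSink D v) :
    D a v ↔ D v b :=
  ⟨hD.rel_of_rel_of_not_isSink hv hsink,
    hD.flip.rel_of_rel_of_not_isSink (hv.trans (Set.pair_comm a b)) hsource⟩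

end IsOrientation

namespace IsSTOrientation

variable {G : SimpleGraph V} {D : V → V → Prop} {s t v : V}

theorem eq_of_isSource (hD : IsSTOrientation G D s t) (hv : IsSource D v) : v = s :=
  hD.2.2.2.1 v hv

theorem eq_of_isSink (hD : IsSTOrientation G D s t) (hv : IsSink D v) : v = t :=
  hD.2.2.2.2.2 v hv

end IsSTOrientation

theorem stmt0_general {G : SimpleGraph V} {D : V → V → Prop} (hD : IsOrientation G D)
    {k : ℕ} {p : ℕ → V} (hadj : ∀ i, i + 1 < k → G.Adj (p i) (p (i + 1)))
    (hne : ∀ i, i + 2 < k → p i ≠ p (i + 2))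
    (hinternal : ∀ i, 0 < i → i + 1 < k →
      (G.neighborSet (p i)).encard = 2 ∧ ¬ IsSource D (p i) ∧ ¬ IsSink D (p i)) :
    (∀ i, i + 1 < k → D (p i) (p (i + 1))) ∨
    (∀ i, i + 1 < k → D (p (i + 1)) (p i)) := by
  have hstep : ∀ i, i + 1 < k - 1 → (D (p i) (p (i + 1)) ↔ D (p (i + 1)) (p (i + 2))) := by
    intro i hi
    obtain ⟨hcard, hsource, hsink⟩ := hinternal (i + 1) i.succ_pos (by lia)
    have hpair : G.neighborSet (p (i + 1)) = {p i, p (i + 2)} :=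
      eq_pair_of_encard_le_two hcard.le (hadj i (by lia)).symm (hadj (i + 1) (by lia))
        (hne i (by lia))
    exact hD.rel_iff_rel_of_neighborSet_eq_pair hpair hsource hsink
  have hfirst : ∀ i, i + 1 < k → (D (p i) (p (i + 1)) ↔ D (p 0) (p 1)) := fun i hi =>
    iff_zero_of_iff_succ (P := fun i => D (p i) (p (i + 1))) hstep i (Nat.lt_sub_of_add_lt hi)
  by_cases h : D (p 0) (p 1)
  · exact Or.inl fun i hi => (hfirst i hi).2 h
  · exact Or.inr fun i hi => (hD.2 _ _ (hadj i hi).symm).2 (mt (hfirst i hi).1 h)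

/-- In any st-orientation, a path whose internal vertices have degree 2 and avoid `s` and
`t` is oriented consistently: either all its edges are directed forward, or all backward. -/
theorem stmt0 {V : Type*} [Fintype V] [DecidableEq V]
    (G : SimpleGraph V) [DecidableRel G.Adj] (s t : V) (hst : s ≠ t)
    (D : V → V → Prop) (hD : IsSTOrientation G D s t)
    (k : ℕ) (p : ℕ → V)
    (hinj : ∀ i j, i < k → j < k → p i = p j → i = j)
    (hadj : ∀ i, i + 1 < k → G.Adj (p i) (p (i + 1)))
    (hinternal : ∀ i, 0 < i → i + 1 < k →
      G.degree (p i) = 2 ∧ p i ≠ s ∧ p i ≠ t) :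
    (∀ i, i + 1 < k → D (p i) (p (i + 1))) ∨
    (∀ i, i + 1 < k → D (p (i + 1)) (p i)) := by
  exact stmt0_general hD.1 hadj (fun i hi => mt (hinj i (i + 2) (by lia) hi) (by lia))
    fun i hpos hi => (hinternal i hpos hi).imp
      (fun hdeg => by rw [encard_neighborSet_eq_degree, hdeg, Nat.cast_ofNat])
      (And.imp (mt hD.eq_of_isSource) (mt hD.eq_of_isSink))
end

section
/- Let G be a finite simple undirected graph containing a fork gadget F none of whose six vertices is s or t. In any non-transitive st-orientation of G, the boundary edges e9 and e10 of F are either both oriented exiting F or both oriented entering F; moreover, they are oriented exiting F if and only if the boundary edge e1 is oriented entering F. -/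
variable {V : Type*}

/-- A fork gadget in `G`: six vertices `v, m1, m2, x, w, z` with the prescribed internal
edges, three boundary edges `e1 = {a,v}`, `e9 = {w,b}`, `e10 = {z,c}` to outside vertices
`a, b, c`, and no other incident edges at the six fork vertices. -/
structure ForkGadget (G : SimpleGraph V) where
  a : V
  v : V
  m1 : V
  m2 : V
  x : V
  w : V
  z : V
  b : V
  c : V
  distinct : List.Pairwise (· ≠ ·) [v, m1, m2, x, w, z]
  a_outside : a ∉ [v, m1, m2, x, w, z]
  b_outside : b ∉ [v, m1, m2, x, w, z]
  c_outside : c ∉ [v, m1, m2, x, w, z]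
  nbr_v : ∀ u, G.Adj v u ↔ u = a ∨ u = m1 ∨ u = x ∨ u = m2
  nbr_m1 : ∀ u, G.Adj m1 u ↔ u = v ∨ u = w
  nbr_m2 : ∀ u, G.Adj m2 u ↔ u = v ∨ u = z
  nbr_x : ∀ u, G.Adj x u ↔ u = v ∨ u = w ∨ u = z
  nbr_w : ∀ u, G.Adj w u ↔ u = m1 ∨ u = x ∨ u = b
  nbr_z : ∀ u, G.Adj z u ↔ u = m2 ∨ u = x ∨ u = c

/-!
In an acyclic orientation without transitive edges, a directed path `p → q → r` forces `p → y → r`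
for every common neighbour `y` of `p` and `r`, since any other choice closes a directed path of
length three by an edge. Each of `m1`, `m2` has degree two and is neither a source nor a sink, so it
is traversed; applied to the two 4-cycles of the fork, this makes the direction of the edge `{v, x}`
determine all the others. The direction `v → x` yields `a → v`, `w → b` and `z → c`, and reversing
every edge settles `x → v`.
-/

/-- An internal vertex of a digraph: one that is neither a source nor a sink. -/
def IsInternal (D : V → V → Prop) (u : V) : Prop :=
  (∃ p, D p u) ∧ ∃ q, D u q

/-- An acyclic orientation without transitive edges: a non-transitive st-orientation with no
condition on the sources and sinks. -/
structure IsNonTransAcyclicOrientation (G : SimpleGraph V) (D : V → V → Prop) : Prop where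
  isOrientation : IsOrientation G D
  acyclic : DigraphAcyclic D
  not_transEdge : ∀ u v, ¬ TransEdge D u v

theorem IsInternal.swap {D : V → V → Prop} {u : V} (h : IsInternal D u) :
    IsInternal (Function.swap D) u :=
  And.symm h

theorem DigraphAcyclic.swap {D : V → V → Prop} (h : DigraphAcyclic D) :
    DigraphAcyclic (Function.swap D) :=
  fun v hv => h v (Relation.transGen_swap.1 hv)

theorem TransEdge.swap {D : V → V → Prop} {u v : V} (h : TransEdge D u v) :
    TransEdge (Function.swap D) v u := by
  obtain ⟨huv, w, huw, hwv⟩ := h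
  obtain ⟨y, hwy, hyv⟩ := Relation.TransGen.tail'_iff.1 hwv
  exact ⟨huv, y, hyv, Relation.transGen_swap.2 (.head' huw hwy)⟩

namespace IsOrientation

variable {G : SimpleGraph V} {D : V → V → Prop} {u v p q m : V}

theorem swap (h : IsOrientation G D) : IsOrientation G (Function.swap D) :=
  ⟨fun u v huv => (h.1 v u huv).symm, fun u v huv => h.2 v u huv.symm⟩

theorem adj (h : IsOrientation G D) (huv : D u v) : G.Adj u v :=
  h.1 u v huv

theorem asymm (h : IsOrientation G D) (huv : D u v) : ¬ D v u :=
  (h.2 u v (h.adj huv)).1 huv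

theorem total (h : IsOrientation G D) (huv : G.Adj u v) : D u v ∨ D v u :=
  or_iff_not_imp_right.2 (h.2 u v huv).2

theorem in_edge_of_others_out (h : IsOrientation G D) (hu : ∃ y, D y u)
    (hothers : ∀ y, G.Adj u y → y = p ∨ D u y) : D p u := by
  obtain ⟨y, hyu⟩ := hu
  obtain rfl | huy := hothers y (h.adj hyu).symm
  · exact hyu
  · exact absurd huy (h.asymm hyu)

theorem out_edge_of_others_in (h : IsOrientation G D) (hu : ∃ y, D u y)
    (hothers : ∀ y, G.Adj u y → y = q ∨ D y u) : D u q :=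
  h.swap.in_edge_of_others_out hu hothers

theorem path_or_path_of_adj_imp (h : IsOrientation G D) (hm : IsInternal D m)
    (hnbr : ∀ y, G.Adj m y → y = p ∨ y = q) : D p m ∧ D m q ∨ D q m ∧ D m p := by
  obtain ⟨y, hym⟩ := hm.1
  obtain rfl | rfl := hnbr y (h.adj hym).symm
  · refine .inl ⟨hym, h.out_edge_of_others_in hm.2 fun u hu => ?_⟩
    obtain rfl | rfl := hnbr u hu
    exacts [.inr hym, .inl rfl]
  · refine .inr ⟨hym, h.out_edge_of_others_in hm.2 fun u hu => ?_⟩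
    obtain rfl | rfl := hnbr u hu
    exacts [.inl rfl, .inr hym]

end IsOrientation

namespace IsNonTransAcyclicOrientation

variable {G : SimpleGraph V} {D : V → V → Prop} {p q r y v m w x : V}

theorem swap (h : IsNonTransAcyclicOrientation G D) :
    IsNonTransAcyclicOrientation G (Function.swap D) where
  isOrientation := h.isOrientation.swap
  acyclic := h.acyclic.swap
  not_transEdge u v huv := h.not_transEdge v u huv.swap

theorem not_adj_of_transGen (h : IsNonTransAcyclicOrientation G D) (hpq : D p q)
    (hqr : Relation.TransGen D q r) : ¬ G.Adj p r := fun hadj =>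
  (h.isOrientation.total hadj).elim
    (fun hpr => h.not_transEdge p r ⟨hpr, q, hpq, hqr⟩)
    (fun hrp => h.acyclic p ((hqr.head hpq).tail hrp))

theorem path_through_common_neighbor (h : IsNonTransAcyclicOrientation G D)
    (hpq : D p q) (hqr : D q r) (hpy : G.Adj p y) (hyr : G.Adj y r) : D p y ∧ D y r := by
  refine ⟨(h.isOrientation.total hpy).resolve_right fun hyp => ?_,
    (h.isOrientation.total hyr).resolve_right fun hry => ?_⟩
  · exact h.not_adj_of_transGen hyp (.tail (.single hpq) hqr) hyr
  · exact h.not_adj_of_transGen hpq (.tail (.single hqr) hry) hpy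

theorem orient_square (h : IsNonTransAcyclicOrientation G D) (hm : IsInternal D m)
    (hnbr : ∀ y, G.Adj m y → y = v ∨ y = w) (hvx : D v x) (hxw : G.Adj x w) :
    D v m ∧ D m w ∧ D x w := by
  obtain ⟨hvm, hmw⟩ | ⟨hwm, hmv⟩ := h.isOrientation.path_or_path_of_adj_imp hm hnbr
  · exact ⟨hvm, hmw,
      (h.path_through_common_neighbor hvm hmw (h.isOrientation.adj hvx) hxw).2⟩
  · have hxv : D x v := (h.path_through_common_neighbor hwm hmv hxw.symm
      (h.isOrientation.adj hvx).symm).2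
    exact absurd hxv (h.isOrientation.asymm hvx)

end IsNonTransAcyclicOrientation

namespace IsNonTransSTOrientation

variable {G : SimpleGraph V} {D : V → V → Prop} {s t u : V}

theorem isNonTransAcyclicOrientation (h : IsNonTransSTOrientation G D s t) :
    IsNonTransAcyclicOrientation G D :=
  ⟨h.1.1, h.1.2.1, h.2⟩

theorem isInternal (h : IsNonTransSTOrientation G D s t) (hu : u ≠ s ∧ u ≠ t) :
    IsInternal D u := by
  obtain ⟨⟨-, -, -, eq_source, -, eq_sink⟩, -⟩ := h
  exact ⟨not_forall_not.1 (mt (eq_source u) hu.1), not_forall_not.1 (mt (eq_sink u) hu.2)⟩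

end IsNonTransSTOrientation

theorem ForkGadget.orient_boundary {G : SimpleGraph V} {D : V → V → Prop} (F : ForkGadget G)
    (hD : IsNonTransAcyclicOrientation G D)
    (hF : ∀ u ∈ [F.v, F.m1, F.m2, F.w, F.z], IsInternal D u) (hvx : D F.v F.x) :
    D F.a F.v ∧ D F.w F.b ∧ D F.z F.c := by
  obtain ⟨hvm1, hm1w, hxw⟩ : D F.v F.m1 ∧ D F.m1 F.w ∧ D F.x F.w :=
    hD.orient_square (hF F.m1 (by simp)) (fun y => (F.nbr_m1 y).1) hvx
      ((F.nbr_x F.w).2 (by simp))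
  obtain ⟨hvm2, hm2z, hxz⟩ : D F.v F.m2 ∧ D F.m2 F.z ∧ D F.x F.z :=
    hD.orient_square (hF F.m2 (by simp)) (fun y => (F.nbr_m2 y).1) hvx
      ((F.nbr_x F.z).2 (by simp))
  refine ⟨hD.isOrientation.in_edge_of_others_out (hF F.v (by simp)).1 fun y hy => ?_,
    hD.isOrientation.out_edge_of_others_in (hF F.w (by simp)).2 fun y hy => ?_,
    hD.isOrientation.out_edge_of_others_in (hF F.z (by simp)).2 fun y hy => ?_⟩
  · obtain rfl | rfl | rfl | rfl := (F.nbr_v y).1 hy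
    exacts [.inl rfl, .inr hvm1, .inr hvx, .inr hvm2]
  · obtain rfl | rfl | rfl := (F.nbr_w y).1 hy
    exacts [.inr hm1w, .inr hxw, .inl rfl]
  · obtain rfl | rfl | rfl := (F.nbr_z y).1 hy
    exacts [.inr hm2z, .inr hxz, .inl rfl]

theorem stmt3_general {G : SimpleGraph V} {D : V → V → Prop}
    (hD : IsNonTransAcyclicOrientation G D) (F : ForkGadget G)
    (hF : ∀ u ∈ [F.v, F.m1, F.m2, F.w, F.z], IsInternal D u) :
    ((D F.w F.b ∧ D F.z F.c) ∨ (D F.b F.w ∧ D F.c F.z)) ∧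
    ((D F.w F.b ∧ D F.z F.c) ↔ D F.a F.v) := by
  have hadj : G.Adj F.v F.x := (F.nbr_v F.x).2 (by simp)
  obtain hvx | hxv := hD.isOrientation.total hadj
  · obtain ⟨hav, hexit⟩ := F.orient_boundary hD hF hvx
    exact ⟨.inl hexit, iff_of_true hexit hav⟩
  · obtain ⟨hva, henter⟩ : D F.v F.a ∧ D F.b F.w ∧ D F.c F.z :=
      F.orient_boundary hD.swap (fun u hu => (hF u hu).swap) hxv
    exact ⟨.inr henter, iff_of_false (fun hexit => hD.isOrientation.asymm henter.1 hexit.1)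
      (hD.isOrientation.asymm hva)⟩

/-- In any non-transitive st-orientation of a graph containing a fork gadget avoiding
`s` and `t`, the boundary edges `e9` and `e10` are both exiting or both entering the
gadget, and they exit if and only if `e1` enters. -/
theorem stmt3 {V : Type*} (G : SimpleGraph V) (s t : V) (hst : s ≠ t)
    (D : V → V → Prop) (hD : IsNonTransSTOrientation G D s t)
    (F : ForkGadget G)
    (hnost : ∀ u, u ∈ [F.v, F.m1, F.m2, F.x, F.w, F.z] → u ≠ s ∧ u ≠ t) :
    ((D F.w F.b ∧ D F.z F.c) ∨ (D F.b F.w ∧ D F.c F.z)) ∧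
    ((D F.w F.b ∧ D F.z F.c) ↔ D F.a F.v) :=
  stmt3_general hD.isNonTransAcyclicOrientation F fun u hu =>
    hD.isInternal (hnost u (by grind))
end

section
/- The digraph on the nine vertices a, v, m1, m2, x, w, z, b, c with exactly the directed edges (a,v), (v,m1), (m1,w), (v,x), (x,w), (v,m2), (m2,z), (x,z), (w,b), (z,c) — that is, the fork gadget with boundary edge e1 entering and all edges carrying the forced orientation — is acyclic and contains no transitive edge. -/
variable {V : Type*}

/-- The directed edges of the fork gadget with `e1` entering, under the forced
orientation. Vertices: `a=0, v=1, m1=2, m2=3, x=4, w=5, z=6, b=7, c=8`. -/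
def forkForcedD (u v : Fin 9) : Prop :=
  (u, v) ∈ ([(0, 1), (1, 2), (2, 5), (1, 4), (4, 5), (1, 3), (3, 6), (4, 6),
             (5, 7), (6, 8)] : List (Fin 9 × Fin 9))

/-! Measure each vertex of the fork gadget by its distance from `a`. Every edge raises this level by
exactly one. Levels therefore strictly increase along directed paths, so no path closes up; and a
path of length at least two raises the level by at least two, so no edge joins its ends. -/

section Labelling

variable {α : Type*} [Preorder α] {D : V → V → Prop} {f : V → α}

theorem lt_of_transGen_of_forall_lt (hf : ∀ u v, D u v → f u < f v) {u v : V}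
    (huv : Relation.TransGen D u v) : f u < f v :=
  Relation.transGen_minimal (r' := fun x y ↦ f x < f y) hf u v huv

theorem digraphAcyclic_of_forall_lt (hf : ∀ u v, D u v → f u < f v) : DigraphAcyclic D :=
  fun _ hv ↦ (lt_of_transGen_of_forall_lt hf hv).false

theorem not_transEdge_of_forall_covBy (hf : ∀ u v, D u v → f u ⋖ f v) (u v : V) :
    ¬ TransEdge D u v := by
  rintro ⟨huv, w, huw, hwv⟩
  have hlt : f w < f v := lt_of_transGen_of_forall_lt (fun x y hxy ↦ (hf x y hxy).lt) hwv
  exact (hf u v huv).2 (hf u w huw).lt hlt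

end Labelling

/-- The level of a vertex of the fork gadget: its directed distance from `a` in `forkForcedD`,
with the vertices numbered as there. -/
def forkLevel : Fin 9 → ℕ := ![0, 1, 2, 2, 2, 3, 3, 4, 4]

theorem forkLevel_add_one_eq : ∀ u v, forkForcedD u v → forkLevel u + 1 = forkLevel v := by
  unfold forkForcedD
  decide

theorem forkLevel_covBy (u v : Fin 9) (huv : forkForcedD u v) : forkLevel u ⋖ forkLevel v :=
  Order.covBy_iff_add_one_eq.mpr (forkLevel_add_one_eq u v huv)

/-- The fork gadget with boundary edge `e1` entering and all edges carrying the forced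
orientation is acyclic and contains no transitive edge. -/
theorem stmt5 : DigraphAcyclic forkForcedD ∧ ∀ u v, ¬ TransEdge forkForcedD u v :=
  ⟨digraphAcyclic_of_forall_lt fun u v huv ↦ (forkLevel_covBy u v huv).lt,
    not_transEdge_of_forall_covBy forkLevel_covBy⟩
end

section
/- Let G be a finite simple undirected graph containing a fork gadget F none of whose six vertices is s or t, and consider a non-transitive st-orientation of G in which the boundary edge e1 is oriented entering F (directed from a to v) and the boundary edge e9 is oriented exiting F (directed from w to b). Then the edges e3 and e6 are directed from v to x and from x to w, respectively, if and only if the edges e2 and e5 are directed from v to m1 and from m1 to w, respectively. -/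
variable {V : Type*}

/-! A mixed orientation of the second side `p - x - r` of a 4-cycle whose first side is directed
from `p` to `r` would make `x` a source or a sink of the cycle, and then one of the edges at `x` is
bypassed through the first side; orienting the second side backwards closes a directed cycle. So in
a non-transitive orientation one side of a 4-cycle is directed forward if and only if the other is,
and the fork gadget contains the 4-cycle `v, x, w, m1`. -/

section

variable {G : SimpleGraph V} {D : V → V → Prop}

theorem IsOrientation.rel_or_rel {u v : V} (hO : IsOrientation G D)
    (huv : G.Adj u v) : D u v ∨ D v u :=
  or_iff_not_imp_right.2 (hO.2 u v huv).2

theorem TransEdge.of_transGen_of_rel {u v w : V} (huw : Relation.TransGen D u w)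
    (hwv : D w v) (huv : D u v) : TransEdge D u v :=
  let ⟨y, huy, hyw⟩ := Relation.TransGen.head'_iff.1 huw
  ⟨huv, y, huy, .tail' hyw hwv⟩

-- The paths in `TransEdge` may repeat vertices, so every edge on a closed walk is transitive.
theorem digraphAcyclic_of_forall_not_transEdge (hD : ∀ u v, ¬ TransEdge D u v) :
    DigraphAcyclic D := by
  intro v hv
  obtain ⟨w, hvw, -⟩ := Relation.TransGen.head'_iff.1 hv
  exact hD v w (.of_transGen_of_rel hv hvw hvw)

theorem rel_and_rel_of_forall_not_transEdge (hD : ∀ u v, ¬ TransEdge D u v) {p x r : V}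
    (hpr : Relation.TransGen D p r) (hpx : D p x ∨ D x p) (hxr : D x r ∨ D r x) :
    D p x ∧ D x r := by
  rcases hpx with hpx | hxp <;> rcases hxr with hxr | hrx
  · exact ⟨hpx, hxr⟩
  · exact absurd (.of_transGen_of_rel hpr hrx hpx) (hD p x)
  · exact absurd ⟨hxr, p, hxp, hpr⟩ (hD x r)
  · exact absurd ((hpr.tail hrx).tail hxp) (digraphAcyclic_of_forall_not_transEdge hD p)

theorem stmt6_general (hO : IsOrientation G D) (hD : ∀ u v, ¬ TransEdge D u v)
    {p x m r : V}
    (hpx : G.Adj p x) (hxr : G.Adj x r) (hpm : G.Adj p m) (hmr : G.Adj m r) :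
    (D p x ∧ D x r) ↔ (D p m ∧ D m r) where
  mp h := rel_and_rel_of_forall_not_transEdge hD (.tail (.single h.1) h.2)
    (hO.rel_or_rel hpm) (hO.rel_or_rel hmr)
  mpr h := rel_and_rel_of_forall_not_transEdge hD (.tail (.single h.1) h.2)
    (hO.rel_or_rel hpx) (hO.rel_or_rel hxr)

end

/-- In a non-transitive st-orientation of a graph containing a fork gadget avoiding `s`
and `t`, with `e1` entering and `e9` exiting the gadget, the path `v → x → w` is directed
forward if and only if the path `v → m1 → w` is directed forward. -/
theorem stmt6 {V : Type*} (G : SimpleGraph V) (s t : V) (hst : s ≠ t)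
    (D : V → V → Prop) (hD : IsNonTransSTOrientation G D s t)
    (F : ForkGadget G)
    (hnost : ∀ u, u ∈ [F.v, F.m1, F.m2, F.x, F.w, F.z] → u ≠ s ∧ u ≠ t)
    (he1 : D F.a F.v) (he9 : D F.w F.b) :
    (D F.v F.x ∧ D F.x F.w) ↔ (D F.v F.m1 ∧ D F.m1 F.w) :=
  stmt6_general hD.1.1 hD.2 (by simp [F.nbr_v]) (by simp [F.nbr_x]) (by simp [F.nbr_v])
    (by simp [F.nbr_m1])
end

section
/- Consider the variable gadget V_x as a graph on its own vertices together with the two outside endpoints of its edges x and x̄, with the following orientation (the 'true orientation'): the paths P_x and P_x̄ are both directed from s to t; the fork F_x carries the forced orientation (its boundary edge e1 directed from the middle vertex of P_x into F_x, and in particular the shared edge directed from the w-vertex of F_x into the z-vertex of F_x̄, and the edge x directed exiting V_x); and the fork F_x̄ carries the reverse of the forced orientation (every edge of F_x̄ reversed, so its boundary edge e1 is directed from F_x̄ into the middle vertex of P_x̄ and the edge x̄ is directed entering V_x). Then this digraph is acyclic. -/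
variable {V : Type*}

/-- The directed edges of the variable gadget in its `true` orientation.
Vertices: `s=0, t=1`; path `P_x`: `0-2-3-4-1`; path `P_x̄`: `0-5-6-7-1`;
fork `F_x`: `v=8, m1=9, m2=10, x=11, w=12, z=13` with the forced orientation
(`e1` directed from the middle vertex `3` of `P_x` into the fork, the shared edge
directed from `w=12` into the `z`-vertex `19` of `F_x̄`, and the edge `x` directed
from `z=13` out to `20`); fork `F_x̄`: `v=14, m1=15, m2=16, x=17, w=18, z=19`
with the reverse of the forced orientation (`e1` directed from `14` into the middle
vertex `6` of `P_x̄`, and the edge `x̄` directed from the outside vertex `21` into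
`w=18`). -/
def variableGadgetTrueD (u v : Fin 22) : Prop :=
  (u, v) ∈ ([(0, 2), (2, 3), (3, 4), (4, 1),
             (0, 5), (5, 6), (6, 7), (7, 1),
             (3, 8), (8, 9), (9, 12), (8, 11), (11, 12), (8, 10), (10, 13),
             (11, 13), (12, 19), (13, 20),
             (14, 6), (15, 14), (18, 15), (17, 14), (18, 17), (16, 14),
             (19, 16), (19, 17), (21, 18)] : List (Fin 22 × Fin 22))

/-!
Order the parts of the gadget as `P_x`, `F_x`, `F_x̄`, `P_x̄`, with `s` put into the first part and
`t` into the last. In the true orientation no edge goes back to an earlier part: `e1` of `F_x`, the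
shared edge and `e1` of `F_x̄` lead to the next part, and the first edge of `P_x̄` and the last edge
of `P_x` lead from the first part to the last. Inside a part every edge climbs one level: paths run
from `s` to `t`, a fork has the levels `v`, then `m1, m2, x`, then `w, z`, then the outside
endpoint, and reversing a fork just reverses its levels. A directed cycle would therefore stay in
one part and climb forever.
-/

theorem digraphAcyclic_of_rank_lt {α : Type*} [Preorder α] {D : V → V → Prop} (rank : V → α)
    (rank_lt : ∀ u v, D u v → rank u < rank v) : DigraphAcyclic D := by
  intro v hv
  have hlt : Relation.TransGen (· < ·) (rank v) (rank v) := hv.lift rank rank_lt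
  rw [Relation.transGen_eq_self] at hlt
  exact lt_irrefl (rank v) hlt

theorem digraphAcyclic_of_block_le_of_level_lt {α β : Type*} [PartialOrder α] [Preorder β]
    {D : V → V → Prop} (block : V → α) (level : V → β)
    (block_le : ∀ u v, D u v → block u ≤ block v)
    (level_lt : ∀ u v, D u v → block u = block v → level u < level v) : DigraphAcyclic D := by
  refine digraphAcyclic_of_rank_lt (fun v ↦ toLex (block v, level v)) fun u v huv ↦ ?_
  rw [Prod.Lex.toLex_lt_toLex]
  exact (block_le u v huv).lt_or_eq.imp_right fun heq ↦ ⟨heq, level_lt u v huv heq⟩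

/-- The part of the variable gadget containing a vertex: `0` for `P_x` without `t`, `1` for `F_x`,
`2` for `F_x̄`, `3` for `P_x̄` without `s`. The outside endpoint of the edge `x` (resp. `x̄`) is
counted as part of `F_x` (resp. `F_x̄`). -/
def variableGadgetBlock : Fin 22 → Fin 4 :=
  ![0, 3,
    0, 0, 0,
    3, 3, 3,
    1, 1, 1, 1, 1, 1,
    2, 2, 2, 2, 2, 2,
    1, 2]

/-- The height of a vertex within its part of the variable gadget: its position along the directed
path for `P_x` and `P_x̄`, and the layer of the fork for `F_x` and `F_x̄`, counted from the
`v`-vertex in `F_x` and towards the `v`-vertex in the reversed fork `F_x̄`. -/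
def variableGadgetLevel : Fin 22 → Fin 4 :=
  ![0, 3,
    1, 2, 3,
    0, 1, 2,
    0, 1, 1, 1, 2, 2,
    3, 2, 2, 2, 1, 1,
    3, 0]

instance : DecidableRel variableGadgetTrueD := fun u v ↦
  inferInstanceAs (Decidable ((u, v) ∈ (_ : List (Fin 22 × Fin 22))))

theorem variableGadgetBlock_le : ∀ u v, variableGadgetTrueD u v →
    variableGadgetBlock u ≤ variableGadgetBlock v := by
  decide +kernel

theorem variableGadgetLevel_lt : ∀ u v, variableGadgetTrueD u v →
    variableGadgetBlock u = variableGadgetBlock v →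
    variableGadgetLevel u < variableGadgetLevel v := by
  decide +kernel

/-- The variable gadget, in its `true` orientation, is acyclic. -/
theorem stmt8 : DigraphAcyclic variableGadgetTrueD :=
  digraphAcyclic_of_block_le_of_level_lt variableGadgetBlock variableGadgetLevel
    variableGadgetBlock_le variableGadgetLevel_lt
end
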